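/- Let w ∈ W and let w' = π_{J,δ}(w) ∈ W^J. If ℓ(w) = ℓ(w'), then w ≈_{J,δ} w'. -/

import Mathlib

open CoxeterSystem

variable {B : Type*} [Finite B] {W : Type*} [Group W] {M : CoxeterMatrix B}

namespace PartialConjugation

/-- The standard parabolic subgroup `W_J` of `W`, generated by the simple
reflections indexed by `J`. -/
def parab (cs : CoxeterSystem M W) (J : Set B) : Subgroup W :=
  Subgroup.closure (cs.simple '' J)

/-- The simple reflection `s_j` (for `j ∈ J`), viewed as an element of `W_J`. -/
def sJ (cs : CoxeterSystem M W) (J : Set B) (j : B) (hj : j ∈ J) : parab cs J :=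
  ⟨cs.simple j, Subgroup.subset_closure ⟨j, hj, rfl⟩⟩

/-- `w ∈ W^J`: `w` is a minimal length representative of its left coset `w W_J`. -/
def IsMinRep (cs : CoxeterSystem M W) (J : Set B) (w : W) : Prop :=
  ∀ v ∈ parab cs J, cs.length w ≤ cs.length (w * v)

variable (cs : CoxeterSystem M W) (J J' : Set B) (δ : parab cs J ≃* parab cs J')

/-- `δ` carries the set of simple reflections indexed by `J` onto the set of
simple reflections indexed by `J'`. -/
def MapsSimples : Prop :=
  (∀ j, ∀ hj : j ∈ J, ∃ j' ∈ J', (δ (sJ cs J j hj) : W) = cs.simple j') ∧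
  (∀ j' ∈ J', ∃ j, ∃ hj : j ∈ J, (δ (sJ cs J j hj) : W) = cs.simple j')

/-- `K` is a `w`-special subset of `J`. -/
def WSpecial (w : W) (K : Set B) : Prop :=
  K ⊆ J ∧ ∀ k ∈ K, ∃ j, ∃ hjJ : j ∈ J, j ∈ K ∧
    w * cs.simple k * w⁻¹ = (δ (sJ cs J j hjJ) : W)

/-- The set `I(J, w, δ)`: the union of all `w`-special subsets of `J`. -/
def Iset (w : W) : Set B := ⋃₀ {K | WSpecial cs J J' δ w K}

/-- The set `W_J ·_δ V = {δ(u) v u⁻¹ : u ∈ W_J, v ∈ V}`. -/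
def orbSet (V : Set W) : Set W :=
  {x | ∃ u : parab cs J, ∃ v ∈ V, x = (δ u : W) * v * (u : W)⁻¹}

/-- The orbit of `x` under the `δ`-twisted partial conjugation action of `W_J`. -/
def orbitOf (x : W) : Set W := orbSet cs J J' δ {x}

/-- The coset `w W_{I(J,w,δ)}`. -/
def coset (w : W) : Set W :=
  {x | ∃ v ∈ parab cs (Iset cs J J' δ w), x = w * v}

/-- Elementary step `v →_i v'` of `δ`-twisted conjugation: `v' = δ(s_i) v s_i`
with `i ∈ J` and `ℓ(v') ≤ ℓ(v)`. -/
def StepRel (v v' : W) : Prop :=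
  ∃ i, ∃ hi : i ∈ J, v' = (δ (sJ cs J i hi) : W) * v * cs.simple i ∧
    cs.length v' ≤ cs.length v

/-- The relation `v →_{J,δ} v'`. -/
def ToRel : W → W → Prop := Relation.ReflTransGen (StepRel cs J J' δ)

/-- The relation `v ≈_{J,δ} v'`. -/
def Approx (v v' : W) : Prop := ToRel cs J J' δ v v' ∧ ToRel cs J J' δ v' v

/-- The Bruhat order on `W`. -/
def bruhatLE (cs : CoxeterSystem M W) : W → W → Prop :=
  Relation.ReflTransGen
    (fun a b => ∃ t, cs.IsReflection t ∧ b = a * t ∧ cs.length a < cs.length b)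

/-- The set of minimal length elements in the orbit of `x`. -/
def orbMin (x : W) : Set W :=
  {y ∈ orbitOf cs J J' δ x | ∀ z ∈ orbitOf cs J J' δ x, cs.length y ≤ cs.length z}

/-!
Left multiplication by `W_{J'}` and right multiplication by `W_J` both add lengths on minimal
representatives, by the exchange condition. Write `x ∈ W^J` as `x = δ(c) y` with `c ∈ W_J` and `y`
minimal in its double coset `W_{J'} y W_J`. Cyclically shifting `δ(c)` to the right letter by letter
never increases the length, so `δ(c) y d → y d c` for all `d ∈ W_J`; in particular every element
reduces to some `y b` with `b ∈ W_J`. Uniqueness in double cosets shows that `y b` and `y b'` are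
conjugate under the twisted action exactly when `b` and `b'` are conjugate under the twisted action
for `g ↦ y⁻¹ δ(g) y`, which is an isomorphism between smaller parabolic subgroups. Since lengths of
`y b` and `b` differ by a constant, this transfers the problem from `(J, δ, x)` to the new twist and
`c`, and one inducts on `|J|`. If the source of the new twist is all of `J`, then `c = 1` and there
is nothing left to prove. To survive the conjugation by `c`, the special subsets of `J` are replaced
by arbitrary subsets `H` of `W_J` with `x H x⁻¹ ⊆ δ(H)`. Finally, an arrow between elements of equal
length can be reversed.
-/

section

variable {B W : Type*} [Group W] {M : CoxeterMatrix B} (cs : CoxeterSystem M W)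

theorem leftInvSeq_alternatingWord_two_mul (i j : B) :
    ∃ L, cs.leftInvSeq (alternatingWord i j (2 * M i j)) = L ++ L := by
  set ω := alternatingWord i j (2 * M i j)
  have hlen : (cs.leftInvSeq ω).length = 2 * M i j := by simp [ω]
  refine ⟨(cs.leftInvSeq ω).take (M i j), ?_⟩
  conv_lhs => rw [← List.take_append_drop (M i j) (cs.leftInvSeq ω)]
  congr 1
  refine List.ext_getElem (by simp [hlen]; lia) fun k hk _ => ?_
  have hk' : M i j + k < 2 * M i j := by
    rw [List.length_drop, hlen] at hk
    lia
  rw [List.getElem_drop, List.getElem_take, cs.getElem_leftInvSeq_alternatingWord i j _ _ hk',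
    cs.getElem_leftInvSeq_alternatingWord i j _ _ (by lia)]
  have hdiv (n : ℕ) : (2 * n + 1) / 2 = n := by lia
  simp [cs.prod_alternatingWord_eq_mul_pow, hdiv, pow_add]

section InversionParity

variable [DecidableEq W]

/-- The map `(t, e) ↦ (s_i t s_i, e + [t = s_i])` on `W × ℤ/2`. These maps satisfy the braid
relations, and the resulting action of `W` records the parity of the number of occurrences of `t`
in an inversion sequence. -/
def signedConj (i : B) : Function.End (W × ZMod 2) :=
  fun p => (cs.simple i * p.1 * cs.simple i, p.2 + if p.1 = cs.simple i then 1 else 0)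

theorem prod_map_signedConj_reverse (ω : List B) (t : W) (e : ZMod 2) :
    (ω.reverse.map (signedConj cs)).prod (t, e) =
      ((cs.wordProd ω)⁻¹ * t * cs.wordProd ω, e + ((cs.leftInvSeq ω).count t : ℕ)) := by
  induction ω generalizing t e with
  | nil => simp [Function.End.one_def]
  | cons i ω ih =>
    have hcount : ((cs.leftInvSeq ω).map (MulAut.conj (cs.simple i))).count t =
        (cs.leftInvSeq ω).count (cs.simple i * t * cs.simple i) := by
      have ht : t = MulAut.conj (cs.simple i) (cs.simple i * t * cs.simple i) := by
        simp [mul_assoc]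
      conv_lhs => rw [ht]
      exact List.count_map_of_injective _ _ (MulAut.conj (cs.simple i)).injective _
    have hstep : ((i :: ω).reverse.map (signedConj cs)).prod (t, e) =
        (ω.reverse.map (signedConj cs)).prod (signedConj cs i (t, e)) := by
      rw [List.reverse_cons, List.map_append, List.prod_append, List.map_singleton,
        List.prod_singleton]
      rfl
    rw [hstep, signedConj, ih, cs.wordProd_cons, CoxeterSystem.leftInvSeq, List.count_cons, hcount]
    refine Prod.ext (by simp [mul_assoc]) ?_
    simp only [beq_iff_eq, eq_comm (a := t)]
    push_cast
    ring

theorem isLiftable_signedConj : M.IsLiftable (signedConj cs) := by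
  intro i j
  have hpow (n : ℕ) : (signedConj cs i * signedConj cs j) ^ n =
      ((alternatingWord j i (2 * n)).reverse.map (signedConj cs)).prod := by
    induction n with
    | zero => simp [alternatingWord]
    | succ n ih => simp [pow_succ', ih, alternatingWord, mul_add, mul_assoc]
  obtain ⟨L, hL⟩ := leftInvSeq_alternatingWord_two_mul cs j i
  funext ⟨t, e⟩
  rw [hpow, prod_map_signedConj_reverse, M.symmetric i j, hL]
  simp [cs.prod_alternatingWord_eq_mul_pow, CharTwo.add_self_eq_zero, Function.End.one_def]

theorem natCast_count_leftInvSeq_eq {ω ω' : List B} (h : cs.wordProd ω = cs.wordProd ω') (t : W) :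
    ((cs.leftInvSeq ω).count t : ZMod 2) = (cs.leftInvSeq ω').count t := by
  have hlift (υ : List B) : cs.lift ⟨_, isLiftable_signedConj cs⟩ (cs.wordProd υ)⁻¹ =
      (υ.reverse.map (signedConj cs)).prod := by
    rw [← cs.wordProd_reverse, CoxeterSystem.wordProd, map_list_prod, List.map_map]
    congr 2
    exact funext fun i => cs.lift_apply_simple _ i
  have key : (ω.reverse.map (signedConj cs)).prod (t, 0) =
      (ω'.reverse.map (signedConj cs)).prod (t, 0) := by
    rw [← hlift, ← hlift, h]
  rw [prod_map_signedConj_reverse, prod_map_signedConj_reverse] at key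
  simpa using congrArg Prod.snd key

end InversionParity

theorem exists_wordProd_eraseIdx_of_isLeftDescent {ω : List B} {i : B}
    (h : cs.IsLeftDescent (cs.wordProd ω) i) :
    ∃ j < ω.length, cs.simple i * cs.wordProd ω = cs.wordProd (ω.eraseIdx j) := by
  classical
  obtain ⟨υ, hυ, hυ'⟩ := cs.exists_isReduced (cs.simple i * cs.wordProd ω)
  have hcons : cs.wordProd ω = cs.wordProd (i :: υ) := by
    rw [cs.wordProd_cons, ← hυ', cs.simple_mul_simple_cancel_left]
  have hred : cs.IsReduced (i :: υ) := by
    rw [CoxeterSystem.IsReduced, ← hcons, ← cs.isLeftDescent_iff.mp h, hυ', hυ.eq,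
      List.length_cons]
  have hmem : cs.simple i ∈ cs.leftInvSeq ω := by
    by_contra hnot
    have hcount := natCast_count_leftInvSeq_eq cs hcons (cs.simple i)
    rw [List.count_eq_zero_of_not_mem hnot,
      List.count_eq_one_of_mem hred.nodup_leftInvSeq (List.mem_cons_self ..)] at hcount
    simp at hcount
  obtain ⟨j, hj, hji⟩ := List.mem_iff_getElem.mp hmem
  refine ⟨j, by simpa using hj, ?_⟩
  rw [← cs.getD_leftInvSeq_mul_wordProd, List.getD_eq_getElem _ 1 hj, hji]

variable {cs}

theorem isLeftDescent_or_exists_of_isLeftDescent_mul {u x : W} {i : B}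
    (h : cs.IsLeftDescent (u * x) i) :
    cs.IsLeftDescent u i ∨ ∃ x', cs.length x' < cs.length x ∧ cs.simple i * u * x = u * x' := by
  obtain ⟨υ, hυ, rfl⟩ := cs.exists_isReduced u
  obtain ⟨ξ, hξ, rfl⟩ := cs.exists_isReduced x
  have herase {ω : List B} {j : ℕ} (hω : cs.IsReduced ω) (hj : j < ω.length) :
      cs.length (cs.wordProd (ω.eraseIdx j)) < cs.length (cs.wordProd ω) := by
    grind [cs.length_wordProd_le (ω.eraseIdx j), hω.eq]
  rw [← cs.wordProd_append] at h
  obtain ⟨j, hj, he⟩ := exists_wordProd_eraseIdx_of_isLeftDescent cs h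
  rw [cs.wordProd_append, ← mul_assoc] at he
  rcases lt_or_ge j υ.length with hlt | hge
  · rw [List.eraseIdx_append_of_lt_length hlt, cs.wordProd_append, mul_left_inj] at he
    exact .inl (by rw [CoxeterSystem.IsLeftDescent, he]; exact herase hυ hlt)
  · rw [List.eraseIdx_append_of_length_le hge, cs.wordProd_append] at he
    exact .inr ⟨_, herase hξ (by grind), he⟩

variable {J J' K : Set B}

section Parabolic

theorem simple_mem_parab {j : B} (hj : j ∈ J) : cs.simple j ∈ parab cs J :=
  Subgroup.subset_closure ⟨j, hj, rfl⟩

@[simp]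
theorem coe_sJ {j : B} (hj : j ∈ J) : (sJ cs J j hj : W) = cs.simple j := rfl

theorem parab_mono (h : J ⊆ K) : parab cs J ≤ parab cs K :=
  Subgroup.closure_mono (Set.image_mono h)

theorem parab_induction {p : (u : W) → u ∈ parab cs J → Prop} (one : p 1 (one_mem _))
    (mul : ∀ j (hj : j ∈ J) u (hu : u ∈ parab cs J), p u hu →
      p (cs.simple j * u) (mul_mem (simple_mem_parab hj) hu)) {u : W} (hu : u ∈ parab cs J) :
    p u hu := by
  refine Subgroup.closure_induction_left one ?_ ?_ hu
  · rintro _ ⟨j, hj, rfl⟩ y hy h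
    exact mul j hj y hy h
  · rintro _ ⟨j, hj, rfl⟩ y hy h
    simpa only [cs.inv_simple] using mul j hj y hy h

theorem exists_isReduced_of_mem_parab {u : W} (hu : u ∈ parab cs J) :
    ∃ ω : List B, cs.IsReduced ω ∧ (∀ i ∈ ω, i ∈ J) ∧ u = cs.wordProd ω := by
  induction hu using parab_induction with
  | one => exact ⟨[], by simp [CoxeterSystem.IsReduced]⟩
  | mul j hj _ _ ih => ?_
  obtain ⟨ω, hω, hωJ, rfl⟩ := ih
  by_cases hdesc : cs.IsLeftDescent (cs.wordProd ω) j
  · obtain ⟨k, hk, he⟩ := exists_wordProd_eraseIdx_of_isLeftDescent cs hdesc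
    refine ⟨ω.eraseIdx k, ?_, fun i hi => hωJ i (List.mem_of_mem_eraseIdx hi), he⟩
    have := cs.isLeftDescent_iff.mp hdesc
    rw [CoxeterSystem.IsReduced, ← he]
    grind [hω.eq]
  · refine ⟨j :: ω, ?_, by simpa [hj] using hωJ, (cs.wordProd_cons j ω).symm⟩
    rw [CoxeterSystem.IsReduced, cs.wordProd_cons, cs.not_isLeftDescent_iff.mp hdesc, hω.eq,
      List.length_cons]

theorem exists_isLeftDescent_of_mem_parab {u : W} (hu : u ∈ parab cs J) (hu1 : u ≠ 1) :
    ∃ j ∈ J, cs.IsLeftDescent u j := by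
  obtain ⟨ω, hω, hωJ, rfl⟩ := exists_isReduced_of_mem_parab hu
  obtain - | ⟨j, ω⟩ := ω
  · simp at hu1
  · refine ⟨j, hωJ j (by simp), ?_⟩
    rw [CoxeterSystem.IsLeftDescent, hω.eq, cs.wordProd_cons, cs.simple_mul_simple_cancel_left]
    exact Nat.lt_succ_of_le (cs.length_wordProd_le ω)

theorem parab_reduced_induction {p : parab cs J → Prop} (one : p 1)
    (mul : ∀ j (hj : j ∈ J) (u : parab cs J),
      cs.length (cs.simple j * u) = cs.length (u : W) + 1 → p u → p (sJ cs J j hj * u))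
    (u : parab cs J) : p u := by
  induction h : cs.length (u : W) using Nat.strong_induction_on generalizing u with
  | _ n ih =>
    subst h
    by_cases hu : u = 1
    · exact hu ▸ one
    obtain ⟨j, hj, hdesc⟩ := exists_isLeftDescent_of_mem_parab u.2 (by simpa using hu)
    have hcancel : u = sJ cs J j hj * (sJ cs J j hj * u) := by
      ext; simp
    rw [hcancel]
    refine mul j hj _ ?_ (ih _ hdesc _ rfl)
    simpa using (cs.isLeftDescent_iff.mp hdesc).symm

theorem exists_isMinRep_mul (J : Set B) (w : W) :
    ∃ x, ∃ u : parab cs J, IsMinRep cs J x ∧ w = x * u := by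
  let lengthMul (v : parab cs J) := cs.length (w * v)
  let v := Function.argmin lengthMul
  refine ⟨w * v, v⁻¹, fun v' hv' => ?_, by simp⟩
  simpa [lengthMul, mul_assoc] using Function.argmin_le lengthMul (v * ⟨v', hv'⟩)

theorem IsMinRep.length_mul_of_inv {x : W} (hx : IsMinRep cs J x⁻¹) {u : W} (hu : u ∈ parab cs J) :
    cs.length (u * x) = cs.length u + cs.length x := by
  suffices ∀ u : parab cs J, cs.length (u * x) = cs.length (u : W) + cs.length x from this ⟨u, hu⟩
  refine parab_reduced_induction (by simp) fun j hj u hlen ih => ?_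
  have hnot : ¬cs.IsLeftDescent (u * x) j := by
    intro hdesc
    rcases isLeftDescent_or_exists_of_isLeftDescent_mul hdesc with h | ⟨x', hx', he⟩
    · exact absurd h (cs.not_isLeftDescent_iff.mpr hlen)
    · have hx'x : x'⁻¹ = x⁻¹ * ((u : W)⁻¹ * cs.simple j * u) := by
        rw [eq_comm, ← inv_inj, inv_inv, ← mul_right_inj (u : W), ← he]
        simp [mul_assoc]
      have hmin := hx _ (mul_mem (mul_mem (inv_mem u.2) (simple_mem_parab hj)) u.2)
      rw [← hx'x, cs.length_inv, cs.length_inv] at hmin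
      lia
  rw [cs.not_isLeftDescent_iff, ih, ← mul_assoc] at hnot
  simp only [coe_sJ, Subgroup.coe_mul, hnot, hlen]
  ring

theorem IsMinRep.length_mul {x : W} (hx : IsMinRep cs J x) {u : W} (hu : u ∈ parab cs J) :
    cs.length (x * u) = cs.length x + cs.length u := by
  rw [← cs.length_inv, mul_inv_rev, IsMinRep.length_mul_of_inv (by rwa [inv_inv]) (inv_mem hu),
    cs.length_inv, cs.length_inv, add_comm]

theorem isMinRep_of_forall_simple {x : W}
    (h : ∀ j ∈ J, cs.length x ≤ cs.length (x * cs.simple j)) : IsMinRep cs J x := by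
  obtain ⟨m, u, hm, rfl⟩ := exists_isMinRep_mul (cs := cs) J x
  suffices u = 1 by simpa [this] using hm
  by_contra hu
  obtain ⟨j, hj, hdesc⟩ := exists_isLeftDescent_of_mem_parab (inv_mem u.2) (by simpa using hu)
  have hlt := cs.isLeftDescent_inv_iff.mp hdesc
  have hle := h j hj
  rw [mul_assoc, hm.length_mul u.2, hm.length_mul (mul_mem u.2 (simple_mem_parab hj))] at hle
  exact absurd hlt (by rw [CoxeterSystem.IsRightDescent]; lia)

theorem IsMinRep.eq_one_of_mem_parab {c : W} (hc : IsMinRep cs J c) (hmem : c ∈ parab cs J) :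
    c = 1 := by
  simpa using hc _ (inv_mem hmem)

theorem IsMinRep.of_mul {c x : W} (h : IsMinRep cs J (c * x))
    (hlen : cs.length (c * x) = cs.length c + cs.length x) : IsMinRep cs J x := by
  intro v hv
  have := h v hv
  have := cs.length_mul_le c (x * v)
  rw [mul_assoc] at *
  lia

theorem IsMinRep.simple_mul {y : W} (hy : IsMinRep cs J y) {i : B}
    (hi : ¬cs.IsLeftDescent y i) :
    IsMinRep cs J (cs.simple i * y) ∨ ∃ k ∈ J, cs.simple i * y = y * cs.simple k := by
  refine or_iff_not_imp_right.mpr fun hno => isMinRep_of_forall_simple fun k hk => ?_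
  by_contra! hlt
  have hi' := cs.not_isLeftDescent_iff.mp hi
  have hyk := hy.length_mul (simple_mem_parab hk)
  rw [cs.length_simple] at hyk
  have hdesc : cs.IsLeftDescent (y * cs.simple k) i := by
    rw [CoxeterSystem.IsLeftDescent, ← mul_assoc]
    lia
  rcases isLeftDescent_or_exists_of_isLeftDescent_mul hdesc with h | ⟨x', hx', he⟩
  · exact hi h
  · rw [cs.length_simple, Nat.lt_one_iff, cs.length_eq_zero_iff] at hx'
    rw [hx', mul_one] at he
    exact hno ⟨k, hk, by simpa using congrArg (· * cs.simple k) he⟩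

theorem eq_and_mem_parab_of_mul_eq_mul {y y' : W} (hy : IsMinRep cs J y)
    (hy' : IsMinRep cs J y') (hyinv : IsMinRep cs J' y⁻¹) (hyinv' : IsMinRep cs J' y'⁻¹)
    (c : parab cs J') (d : parab cs J) (h : c * y' = y * d) :
    y' = y ∧ (c : W) ∈ parab cs {i ∈ J' | ∃ k ∈ J, cs.simple i * y = y * cs.simple k} := by
  induction c using parab_reduced_induction generalizing d with
  | one =>
    rw [Subgroup.coe_one, one_mul] at h
    have hle := hy' _ (inv_mem d.2)
    rw [h, mul_inv_cancel_right, hy.length_mul d.2] at hle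
    have hd : (d : W) = 1 := cs.length_eq_zero_iff.mp (by lia)
    exact ⟨by rw [h, hd, mul_one], one_mem _⟩
  | mul i hi c hlen ih =>
    have hc : c * y' = cs.simple i * y * d := by
      rw [mul_assoc, ← h]
      simp [mul_assoc]
    have hiy : ¬cs.IsLeftDescent y i := by
      rw [cs.not_isLeftDescent_iff, hyinv.length_mul_of_inv (simple_mem_parab hi), cs.length_simple,
        add_comm]
    rcases hy.simple_mul hiy with hmin | ⟨k, hk, hik⟩
    · have h₁ := congrArg cs.length h
      have h₂ := congrArg cs.length hc
      rw [hyinv'.length_mul_of_inv (SetLike.coe_mem _), hy.length_mul d.2] at h₁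
      rw [hyinv'.length_mul_of_inv c.2, hmin.length_mul d.2, cs.not_isLeftDescent_iff.mp hiy] at h₂
      simp only [coe_sJ, Subgroup.coe_mul] at h₁
      lia
    · obtain ⟨hyy', hmem⟩ := ih (sJ cs J k hk * d) (by rw [hc, hik]; simp [mul_assoc])
      exact ⟨hyy', mul_mem (simple_mem_parab ⟨hi, k, hk, hik⟩) hmem⟩

end Parabolic

variable {δ : parab cs J ≃* parab cs J'}

section Twist

theorem apply_sJ_mul_cancel_left (δ : parab cs J ≃* parab cs J') {j : B} (hj : j ∈ J) (v : W) :
    (δ (sJ cs J j hj) : W) * (δ (sJ cs J j hj) * v) = v := by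
  have hsq : sJ cs J j hj * sJ cs J j hj = 1 := Subtype.ext (cs.simple_mul_simple_self j)
  rw [← mul_assoc, ← Subgroup.coe_mul, ← map_mul, hsq, map_one, Subgroup.coe_one, one_mul]

theorem MapsSimples.symm (hδ : MapsSimples cs J J' δ) : MapsSimples cs J' J δ.symm := by
  have hsymm {j j' : B} {hj : j ∈ J} (hj' : j' ∈ J')
      (h : (δ (sJ cs J j hj) : W) = cs.simple j') :
      (δ.symm (sJ cs J' j' hj') : W) = cs.simple j := by
    rw [show sJ cs J' j' hj' = δ (sJ cs J j hj) from Subtype.ext h.symm, δ.symm_apply_apply, coe_sJ]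
  refine ⟨fun j' hj' => ?_, fun j hj => ?_⟩
  · obtain ⟨j, hj, h⟩ := hδ.2 j' hj'
    exact ⟨j, hj, hsymm hj' h⟩
  · obtain ⟨j', hj', h⟩ := hδ.1 j hj
    exact ⟨j', hj', hsymm hj' h⟩

theorem MapsSimples.length_le (hδ : MapsSimples cs J J' δ) (u : parab cs J) :
    cs.length (δ u : W) ≤ cs.length (u : W) := by
  induction u using parab_reduced_induction with
  | one => simp
  | mul j hj u hlen ih => ?_
  obtain ⟨j', -, hj'⟩ := hδ.1 j hj
  calc cs.length (δ (sJ cs J j hj * u) : W)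
      ≤ 1 + cs.length (δ u : W) := by
        rw [map_mul, Subgroup.coe_mul, hj', ← cs.length_simple j']
        exact cs.length_mul_le _ _
    _ ≤ cs.length (sJ cs J j hj * u : W) := by
        rw [coe_sJ, hlen]
        lia

theorem MapsSimples.length_apply (hδ : MapsSimples cs J J' δ) (u : parab cs J) :
    cs.length (δ u : W) = cs.length (u : W) :=
  (hδ.length_le u).antisymm (by simpa using hδ.symm.length_le (δ u))

theorem MapsSimples.mem_parab_of_apply_mem (hδ : MapsSimples cs J J' δ) {K' : Set B}
    (hK' : K' ⊆ J') {g : parab cs J} (hg : (δ g : W) ∈ parab cs K') :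
    (g : W) ∈ parab cs {j | ∃ hj : j ∈ J, ∃ k ∈ K', (δ (sJ cs J j hj) : W) = cs.simple k} := by
  generalize hv : (δ g : W) = v at hg
  induction hg using parab_induction generalizing g with
  | one =>
    rw [OneMemClass.coe_eq_one, map_eq_one_iff δ δ.injective] at hv
    exact hv ▸ one_mem _
  | mul k hk _ _ ih =>
    obtain ⟨j, hj, hjk⟩ := hδ.2 k (hK' hk)
    have hmem := ih (g := sJ cs J j hj * g) (by simp [hv, hjk])
    have hcancel : (g : W) = cs.simple j * (sJ cs J j hj * g : parab cs J) := by simp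
    exact hcancel ▸ mul_mem (simple_mem_parab ⟨hj, k, hk, hjk⟩) hmem

theorem ToRel.length_le {v v' : W} (h : ToRel cs J J' δ v v') : cs.length v' ≤ cs.length v := by
  induction h with
  | refl => rfl
  | tail _ h ih =>
    obtain ⟨_, _, _, hle⟩ := h
    exact hle.trans ih

theorem ToRel.reverse {v v' : W} (h : ToRel cs J J' δ v v') (hlen : cs.length v ≤ cs.length v') :
    ToRel cs J J' δ v' v := by
  induction h with
  | refl => exact .refl
  | tail h₁ h₂ ih =>
    obtain ⟨i, hi, rfl, hle⟩ := h₂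
    refine .head ⟨i, hi, ?_, hlen.trans' (ToRel.length_le h₁)⟩ (ih (hlen.trans hle))
    simp only [mul_assoc, apply_sJ_mul_cancel_left, cs.simple_mul_simple_self, mul_one]

theorem ToRel.exists_eq_conj {v v' : W} (h : ToRel cs J J' δ v v') :
    ∃ a : parab cs J, v' = δ a * v * (a : W)⁻¹ := by
  induction h with
  | refl => exact ⟨1, by simp⟩
  | tail _ h ih =>
    obtain ⟨i, hi, rfl, -⟩ := h
    obtain ⟨a, rfl⟩ := ih
    exact ⟨sJ cs J i hi * a, by simp [mul_assoc]⟩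

end Twist

section Descent

theorem toRel_mul_of_isMinRep (hδ : MapsSimples cs J J' δ) {y : W} (hy : IsMinRep cs J' y⁻¹)
    (a : parab cs J) (hmin : IsMinRep cs J (δ a * y)) (d : parab cs J) :
    ToRel cs J J' δ (δ a * y * d) (y * (d * a)) := by
  have hlen (u : parab cs J) : cs.length (δ u * y) = cs.length (u : W) + cs.length y := by
    rw [hy.length_mul_of_inv (δ u).2, hδ.length_apply]
  induction a using parab_reduced_induction generalizing d with
  | one =>
    rw [map_one, Subgroup.coe_one, Subgroup.coe_one, mul_one, one_mul]
    exact .refl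
  | mul j hj a hja ih =>
    have hstep : δ (sJ cs J j hj * a) * y = δ (sJ cs J j hj) * (δ a * y) := by
      rw [map_mul, Subgroup.coe_mul, mul_assoc]
    have hlen_step : cs.length (δ (sJ cs J j hj * a) * y) = 1 + cs.length (δ a * y) := by
      rw [hlen, hlen, Subgroup.coe_mul, coe_sJ, hja]
      ring
    have hmin' : IsMinRep cs J (δ a * y) := by
      rw [hstep] at hmin hlen_step
      refine hmin.of_mul ?_
      rw [hlen_step, hδ.length_apply, coe_sJ, cs.length_simple]
    have hconj : δ (sJ cs J j hj) * (δ (sJ cs J j hj * a) * y * d) * cs.simple j =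
        δ a * y * (d * sJ cs J j hj : parab cs J) := by
      simp only [map_mul, Subgroup.coe_mul, coe_sJ, mul_assoc, apply_sJ_mul_cancel_left]
    have hassoc : (d * (sJ cs J j hj * a : parab cs J) : W) =
        (d * sJ cs J j hj : parab cs J) * a := by
      simp only [Subgroup.coe_mul, mul_assoc]
    refine .head ⟨j, hj, rfl, ?_⟩ ?_
    · have hle := cs.length_mul_le d (cs.simple j)
      rw [cs.length_simple] at hle
      rw [hconj, hmin'.length_mul (SetLike.coe_mem _), hmin.length_mul d.2, hlen_step]
      simp only [coe_sJ, Subgroup.coe_mul]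
      lia
    · rw [hconj, hassoc]
      exact ih hmin' (d * sJ cs J j hj)

theorem IsMinRep.exists_forall_toRel (hδ : MapsSimples cs J J' δ) {x : W} (hx : IsMinRep cs J x) :
    ∃ y, ∃ c : parab cs J, IsMinRep cs J y ∧ IsMinRep cs J' y⁻¹ ∧ x = δ c * y ∧
      ∀ d : parab cs J, ToRel cs J J' δ (x * d) (y * (d * c)) := by
  obtain ⟨y, u, hy, hxy⟩ := exists_isMinRep_mul (cs := cs) J' x⁻¹
  have hxu : x = δ (δ.symm u⁻¹) * y⁻¹ := by
    rw [← inv_inv x, hxy]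
    simp
  rw [← inv_inv y] at hy
  refine ⟨y⁻¹, δ.symm u⁻¹, ?_, hy, hxu, fun d => ?_⟩
  · refine .of_mul (c := (u : W)⁻¹) ?_ (hy.length_mul_of_inv (inv_mem u.2))
    simpa [hxu] using hx
  · rw [hxu] at hx ⊢
    exact toRel_mul_of_isMinRep hδ hy _ hx d

theorem exists_toRel_mul (hδ : MapsSimples cs J J' δ) (w : W) :
    ∃ y, ∃ b : parab cs J, IsMinRep cs J y ∧ IsMinRep cs J' y⁻¹ ∧ ToRel cs J J' δ w (y * b) := by
  obtain ⟨x, d, hx, rfl⟩ := exists_isMinRep_mul (cs := cs) J w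
  obtain ⟨y, c, hy, hy', -, hrel⟩ := hx.exists_forall_toRel hδ
  exact ⟨y, d * c, hy, hy', hrel d⟩

end Descent

section ConjTwist

/-- The set `{j ∈ J | y⁻¹ δ(s_j) y = s_k for some k ∈ J}`, which indexes the parabolic subgroup on
which the twist obtained from `δ` by conjugation with `y` is defined. -/
def conjSource (δ : parab cs J ≃* parab cs J') (y : W) : Set B :=
  {j | ∃ hj : j ∈ J, ∃ k ∈ J, (δ (sJ cs J j hj) : W) * y = y * cs.simple k}

/-- The set `{k ∈ J | s_k = y⁻¹ δ(s_j) y for some j ∈ J}`, the image of `conjSource δ y`. -/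
def conjTarget (δ : parab cs J ≃* parab cs J') (y : W) : Set B :=
  {k | k ∈ J ∧ ∃ j, ∃ hj : j ∈ J, (δ (sJ cs J j hj) : W) * y = y * cs.simple k}

theorem conjSource_subset (δ : parab cs J ≃* parab cs J') (y : W) : conjSource δ y ⊆ J :=
  fun _ h => h.1

theorem conjTarget_subset (δ : parab cs J ≃* parab cs J') (y : W) : conjTarget δ y ⊆ J :=
  fun _ h => h.1

/-- The homomorphism `g ↦ y⁻¹ δ(g) y` underlying `conjTwist`. -/
def conjTwistHom (δ : parab cs J ≃* parab cs J') (y : W) : parab cs (conjSource δ y) →* W :=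
  (MulAut.conj y⁻¹).toMonoidHom.comp ((parab cs J').subtype.comp
    (δ.toMonoidHom.comp (Subgroup.inclusion (parab_mono (conjSource_subset δ y)))))

theorem mul_conjTwistHom (δ : parab cs J ≃* parab cs J') (y : W) {g : parab cs (conjSource δ y)}
    {g' : parab cs J} (h : (g : W) = g') : y * conjTwistHom δ y g = δ g' * y := by
  rw [show g' = Subgroup.inclusion (parab_mono (conjSource_subset δ y)) g from Subtype.ext h.symm]
  simp [conjTwistHom, mul_assoc]

theorem conjTwistHom_injective (δ : parab cs J ≃* parab cs J') (y : W) :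
    Function.Injective (conjTwistHom δ y) :=
  (MulAut.conj y⁻¹).injective.comp (Subtype.val_injective.comp
    (δ.injective.comp (Subgroup.inclusion_injective _)))

theorem exists_conjTwistHom_sJ_eq {y : W} {j : B} (hj : j ∈ conjSource δ y) :
    ∃ k ∈ conjTarget δ y, conjTwistHom δ y (sJ cs _ j hj) = cs.simple k := by
  obtain ⟨hjJ, k, hk, h⟩ := id hj
  exact ⟨k, ⟨hk, j, hjJ, h⟩, mul_left_cancel ((mul_conjTwistHom δ y rfl).trans h)⟩

theorem exists_eq_conjTwistHom_sJ {y : W} {k : B} (hk : k ∈ conjTarget δ y) :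
    ∃ j, ∃ hj : j ∈ conjSource δ y, conjTwistHom δ y (sJ cs _ j hj) = cs.simple k := by
  obtain ⟨hkJ, j, hj, h⟩ := hk
  exact ⟨j, ⟨hj, k, hkJ, h⟩, mul_left_cancel ((mul_conjTwistHom δ y rfl).trans h)⟩

theorem range_conjTwistHom (δ : parab cs J ≃* parab cs J') (y : W) :
    (conjTwistHom δ y).range = parab cs (conjTarget δ y) := by
  refine le_antisymm ?_ ((Subgroup.closure_le _).mpr ?_)
  · rintro _ ⟨g, rfl⟩
    induction g using parab_reduced_induction with
    | one => simp
    | mul j hj g _ ih =>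
      obtain ⟨k, hk, hjk⟩ := exists_conjTwistHom_sJ_eq hj
      rw [map_mul, hjk]
      exact mul_mem (simple_mem_parab hk) ih
  · rintro _ ⟨k, hk, rfl⟩
    obtain ⟨j, hj, hjk⟩ := exists_eq_conjTwistHom_sJ hk
    exact ⟨_, hjk⟩

/-- The twist `g ↦ y⁻¹ δ(g) y`, restricted to standard parabolic subgroups between which it is an
isomorphism preserving simple reflections. -/
noncomputable def conjTwist (δ : parab cs J ≃* parab cs J') (y : W) :
    parab cs (conjSource δ y) ≃* parab cs (conjTarget δ y) :=
  (MonoidHom.ofInjective (conjTwistHom_injective δ y)).trans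
    (MulEquiv.subgroupCongr (range_conjTwistHom δ y))

theorem mapsSimples_conjTwist (δ : parab cs J ≃* parab cs J') (y : W) :
    MapsSimples cs _ _ (conjTwist δ y) :=
  ⟨fun _ hj => exists_conjTwistHom_sJ_eq hj, fun _ hk => exists_eq_conjTwistHom_sJ hk⟩

theorem mul_conjTwist (δ : parab cs J ≃* parab cs J') (y : W) {g : parab cs (conjSource δ y)}
    {g' : parab cs J} (h : (g : W) = g') : y * conjTwist δ y g = δ g' * y :=
  mul_conjTwistHom δ y h

theorem conjTwist_mem_parab (δ : parab cs J ≃* parab cs J') (y : W)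
    (g : parab cs (conjSource δ y)) : (conjTwist δ y g : W) ∈ parab cs J :=
  parab_mono (conjTarget_subset δ y) (SetLike.coe_mem _)

theorem ToRel.mul_left_of_conjTwist {y b b' : W} (hy : IsMinRep cs J y) (hb : b ∈ parab cs J)
    (h : ToRel cs _ _ (conjTwist δ y) b b') : ToRel cs J J' δ (y * b) (y * b') := by
  induction h using Relation.ReflTransGen.head_induction_on with
  | refl => exact .refl
  | head h _ ih =>
    obtain ⟨i, hi, rfl, hle⟩ := h
    have hiJ := conjSource_subset δ y hi
    have hmem := mul_mem (mul_mem (conjTwist_mem_parab δ y (sJ cs _ i hi)) hb)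
      (simple_mem_parab hiJ)
    refine .head ⟨i, hiJ, ?_, ?_⟩ (ih hmem)
    · rw [← mul_assoc, ← mul_assoc, ← mul_assoc, mul_conjTwist (g' := sJ cs J i hiJ) δ y rfl]
    · rw [hy.length_mul hmem, hy.length_mul hb]
      lia

theorem eq_and_exists_conjTwist_eq (hδ : MapsSimples cs J J' δ) {y z : W} (hy : IsMinRep cs J y)
    (hz : IsMinRep cs J z) (hyinv : IsMinRep cs J' y⁻¹) (hzinv : IsMinRep cs J' z⁻¹)
    {g d : parab cs J} (h : δ g * z = y * d) :
    z = y ∧ ∃ g₁ : parab cs (conjSource δ y), (g₁ : W) = g ∧ (conjTwist δ y g₁ : W) = d := by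
  obtain ⟨rfl, hmem⟩ := eq_and_mem_parab_of_mul_eq_mul hy hz hyinv hzinv (δ g) d h
  have hg : (g : W) ∈ parab cs (conjSource δ z) := by
    refine parab_mono ?_ (hδ.mem_parab_of_apply_mem (Set.sep_subset _ _) hmem)
    rintro j ⟨hj, i, ⟨-, k, hk, hik⟩, hji⟩
    exact ⟨hj, k, hk, by rw [hji, hik]⟩
  exact ⟨rfl, ⟨g, hg⟩, rfl, mul_left_cancel ((mul_conjTwist δ z rfl).trans h)⟩

theorem IsMinRep.of_apply_mul (hδ : MapsSimples cs J J' δ) {y : W} {c : parab cs J}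
    (hx : IsMinRep cs J (δ c * y)) (hyinv : IsMinRep cs J' y⁻¹) :
    IsMinRep cs (conjSource δ y) (c : W) := by
  intro v hv
  have hle := hx _ (conjTwist_mem_parab δ y ⟨v, hv⟩)
  rw [mul_assoc, mul_conjTwist (g' := ⟨v, parab_mono (conjSource_subset δ y) hv⟩) δ y rfl,
    ← mul_assoc, ← Subgroup.coe_mul, ← map_mul, hyinv.length_mul_of_inv (δ _).2,
    hyinv.length_mul_of_inv (δ _).2, hδ.length_apply, hδ.length_apply] at hle
  exact le_of_add_le_add_right hle

end ConjTwist

section TwistStable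

/-- A subset `H` of `W_J` is twist-stable at `x` if `x H x⁻¹ ⊆ δ(H)`. The subgroup
`W_{I(J,x,δ)}` is the motivating example; unlike special subsets of `J`, twist-stable sets
can be conjugated. -/
def TwistStable (δ : parab cs J ≃* parab cs J') (x : W) (H : Set (parab cs J)) : Prop :=
  ∀ h ∈ H, ∃ h' ∈ H, x * h = δ h' * x

theorem twistStable_Iset (δ : parab cs J ≃* parab cs J') (x : W) :
    TwistStable δ x {h | (h : W) ∈ parab cs (Iset cs J J' δ x)} := by
  suffices ∀ h ∈ parab cs (Iset cs J J' δ x), ∃ h' : parab cs J,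
      (h' : W) ∈ parab cs (Iset cs J J' δ x) ∧ x * h = δ h' * x from fun h hh => this h hh
  intro h hh
  induction hh using parab_induction with
  | one => exact ⟨1, one_mem _, by simp⟩
  | mul k hk h _ ih =>
    obtain ⟨K, hK, hkK⟩ := hk
    obtain ⟨j, hj, hjK, hjk⟩ := hK.2 k hkK
    obtain ⟨h', hh', he⟩ := ih
    refine ⟨sJ cs J j hj * h', mul_mem (simple_mem_parab ⟨K, hK, hjK⟩) hh', ?_⟩
    rw [map_mul, Subgroup.coe_mul, ← hjk, mul_assoc _ (δ h' : W), ← he]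
    simp [mul_assoc]

/-- The set `c⁻¹ H c ∩ W_K` for `K = conjSource δ y`, the twist-stable set to which the inductive
argument passes. -/
def conjSet (δ : parab cs J ≃* parab cs J') (y : W) (c : parab cs J) (H : Set (parab cs J)) :
    Set (parab cs (conjSource δ y)) :=
  {k | ∃ h ∈ H, (c * k : W) = h * c}

theorem TwistStable.exists_conjTwist_eq (hδ : MapsSimples cs J J' δ) {y : W}
    (hy : IsMinRep cs J y) (hyinv : IsMinRep cs J' y⁻¹) {c : parab cs J} {H : Set (parab cs J)}
    (hH : TwistStable δ (δ c * y) H) {h : parab cs J} (hh : h ∈ H) :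
    ∃ k ∈ conjSet δ y c H, (conjTwist δ y k : W) = h := by
  obtain ⟨h', hh', he⟩ := hH h hh
  have hconj : δ (c⁻¹ * h' * c) * y = y * h := by
    rw [← mul_right_inj (δ c : W), ← mul_assoc _ y, he]
    simp [mul_assoc]
  obtain ⟨-, k, hk, hkh⟩ := eq_and_exists_conjTwist_eq hδ hy hy hyinv hyinv hconj
  exact ⟨k, ⟨h', hh', by simp [hk, mul_assoc]⟩, hkh⟩

theorem TwistStable.conjSet (hδ : MapsSimples cs J J' δ) {y : W} (hy : IsMinRep cs J y)
    (hyinv : IsMinRep cs J' y⁻¹) {c : parab cs J} {H : Set (parab cs J)}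
    (hH : TwistStable δ (δ c * y) H) : TwistStable (conjTwist δ y) c (conjSet δ y c H) := by
  rintro k ⟨h, hh, hkh⟩
  obtain ⟨k', hk', hk'h⟩ := hH.exists_conjTwist_eq hδ hy hyinv hh
  exact ⟨k', hk', by rw [hkh, hk'h]⟩

end TwistStable

section Reduction

theorem exists_toRel_mul_conjTwist (hδ : MapsSimples cs J J' δ) {y : W} (hy : IsMinRep cs J y)
    (hyinv : IsMinRep cs J' y⁻¹) (u k : parab cs J) :
    ∃ g : parab cs (conjSource δ y), ∃ b : parab cs J, (b : W) = conjTwist δ y g * k * (g : W)⁻¹ ∧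
      ToRel cs J J' δ (δ u * (δ k * y) * (u : W)⁻¹) (y * b) := by
  obtain ⟨z, b, hz, hzinv, hrel⟩ := exists_toRel_mul hδ (δ u * (δ k * y) * (u : W)⁻¹)
  obtain ⟨a, ha⟩ := hrel.exists_eq_conj
  have hconj : δ (a * u * k)⁻¹ * z = y * ((a * u)⁻¹ * b⁻¹ : parab cs J) := by
    rw [← mul_left_inj (b : W), mul_assoc _ z, ha]
    simp [mul_assoc]
  obtain ⟨rfl, g, hg, hgb⟩ := eq_and_exists_conjTwist_eq hδ hy hz hyinv hzinv hconj
  refine ⟨g⁻¹, b, ?_, hrel⟩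
  rw [map_inv, Subgroup.coe_inv, Subgroup.coe_inv, hg, hgb]
  simp [mul_assoc]

theorem toRel_of_twistStable (hJ : J.Finite) (hδ : MapsSimples cs J J' δ) {x : W}
    (hx : IsMinRep cs J x) {H : Set (parab cs J)} (hH : TwistStable δ x H) {u v : parab cs J}
    (hv : v ∈ H) (hlen : cs.length (δ u * (x * v) * (u : W)⁻¹) ≤ cs.length x) :
    ToRel cs J J' δ (δ u * (x * v) * (u : W)⁻¹) x := by
  induction hcard : J.ncard using Nat.strong_induction_on generalizing J J' x with
  | _ n ih =>
  obtain ⟨y, c, hy, hyinv, rfl, hxy⟩ := hx.exists_forall_toRel hδ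
  obtain ⟨k, hk, hkv⟩ := hH.exists_conjTwist_eq hδ hy hyinv hv
  let k' : parab cs J := ⟨k, parab_mono (conjSource_subset δ y) k.2⟩
  have hxv : δ c * y * v = δ (c * k') * y := by
    rw [mul_assoc, ← hkv, mul_conjTwist (g' := k') δ y rfl]
    simp [mul_assoc]
  rw [hxv] at hlen ⊢
  obtain ⟨g, b, hb, hrel⟩ := exists_toRel_mul_conjTwist hδ hy hyinv u (c * k')
  have hlen_x : cs.length (δ c * y) = cs.length (y * c) := by
    rw [hyinv.length_mul_of_inv (δ c).2, hδ.length_apply, hy.length_mul c.2, add_comm]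
  have hlen_b : cs.length (b : W) ≤ cs.length (c : W) := by
    have hle := (hrel.length_le.trans hlen).trans_eq hlen_x
    rwa [hy.length_mul b.2, hy.length_mul c.2, add_le_add_iff_left] at hle
  have hbc : ToRel cs _ _ (conjTwist δ y) b c := by
    have hc := hx.of_apply_mul hδ hyinv
    rcases (conjSource_subset δ y).eq_or_ssubset with heq | hss
    · have hc1 : (c : W) = 1 := by
        rw [heq] at hc
        exact hc.eq_one_of_mem_parab c.2
      have hb1 : (b : W) = 1 := cs.length_eq_zero_iff.mp (by simpa [hc1] using hlen_b)
      rw [hb1, hc1]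
      exact .refl
    · rw [hb, Subgroup.coe_mul] at hlen_b ⊢
      exact ih _ (hcard ▸ Set.ncard_lt_ncard hss hJ) (hJ.subset hss.subset)
        (mapsSimples_conjTwist δ y) hc (hH.conjSet hδ hy hyinv) hk hlen_b rfl
  have hcx : ToRel cs J J' δ (y * c) (δ c * y) :=
    ToRel.reverse (by simpa only [Subgroup.coe_one, mul_one, one_mul] using hxy 1) hlen_x.le
  exact (hrel.trans (hbc.mul_left_of_conjTwist hy b.2)).trans hcx

end Reduction

theorem stmt5_general (hJ : J.Finite) (hδ : MapsSimples cs J J' δ) {w w' : W}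
    (hw' : IsMinRep cs J w') (hproj : w ∈ orbSet cs J J' δ (coset cs J J' δ w'))
    (hlen : cs.length w = cs.length w') :
    Approx cs J J' δ w w' := by
  obtain ⟨u, _, ⟨v, hv, rfl⟩, rfl⟩ := hproj
  have hvJ : v ∈ parab cs J := parab_mono (Set.sUnion_subset fun _ hK => hK.1) hv
  have hrel := toRel_of_twistStable (v := ⟨v, hvJ⟩) hJ hδ hw' (twistStable_Iset δ w') hv hlen.le
  exact ⟨hrel, hrel.reverse hlen.le⟩

end

/-- If `w' = π_{J,δ}(w)` (i.e. `w' ∈ W^J` and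
`w ∈ W_J ·_δ (w' W_{I(J,w',δ)})`) and `ℓ(w) = ℓ(w')`, then `w ≈_{J,δ} w'`. -/
theorem stmt5 (hδ : MapsSimples cs J J' δ) (w w' : W) (hw' : IsMinRep cs J w')
    (hproj : w ∈ orbSet cs J J' δ (coset cs J J' δ w'))
    (hlen : cs.length w = cs.length w') :
    Approx cs J J' δ w w' :=
  stmt5_general (Set.toFinite J) hδ hw' hproj hlen

end PartialConjugation
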